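/- Let A = (L_1,L_2,L_3,L_4) and A' = (L'_1,L'_2,L'_3,L'_4) encode (4,1) valise adinkras with chiralities χ and χ' respectively. Then Σ_{I≠J} trace(L_Iᵀ·L_J·L'_Iᵀ·L'_J), the sum over all ordered pairs of distinct I,J ∈ {1,2,3,4}, equals 2·(1 + χ·χ')·(trace(L_1ᵀ·L_2·L'_1ᵀ·L'_2) + trace(L_1ᵀ·L_3·L'_1ᵀ·L'_3) + trace(L_1ᵀ·L_4·L'_1ᵀ·L'_4)). -/

import Mathlib

open Matrix

/-- A signed permutation matrix: exactly one nonzero entry in each row and column,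
that entry being `1` or `-1`. -/
def IsSignedPerm {n : ℕ} (M : Matrix (Fin n) (Fin n) ℤ) : Prop :=
  (∀ i j, M i j = 0 ∨ M i j = 1 ∨ M i j = -1) ∧
  (∀ i, ∃! j, M i j ≠ 0) ∧
  (∀ j, ∃! i, M i j ≠ 0)

/-- The garden algebra relations for a family of `d × d` integer matrices. -/
def GardenRel {d N : ℕ} (L : Fin N → Matrix (Fin d) (Fin d) ℤ) : Prop :=
  ∀ I J : Fin N,
    (L I * (L J)ᵀ + L J * (L I)ᵀ =
      if I = J then (2 : ℤ) • (1 : Matrix (Fin d) (Fin d) ℤ) else 0) ∧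
    ((L I)ᵀ * L J + (L J)ᵀ * L I =
      if I = J then (2 : ℤ) • (1 : Matrix (Fin d) (Fin d) ℤ) else 0)

/-- The L-matrices of a (4,1) valise adinkra: a quadruple of 4×4 integer signed
permutation matrices satisfying the garden algebra relations. -/
def IsAdinkra (L : Fin 4 → Matrix (Fin 4) (Fin 4) ℤ) : Prop :=
  (∀ I, IsSignedPerm (L I)) ∧ GardenRel L

/-- `Σ_{I≠J} trace(L_Iᵀ·L_J·L'_Iᵀ·L'_J)`, summed over ordered pairs of distinct
`I, J ∈ {1,2,3,4}`; the gadget is `OG(A,A') = -(1/48)` times this quantity. -/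
def gadgetSum (L L' : Fin 4 → Matrix (Fin 4) (Fin 4) ℤ) : ℤ :=
  ∑ I : Fin 4, ∑ J : Fin 4,
    if I ≠ J then Matrix.trace ((L I)ᵀ * L J * (L' I)ᵀ * L' J) else 0

namespace GardenRel

variable {d N : ℕ} {L : Fin N → Matrix (Fin d) (Fin d) ℤ}

theorem transpose_mul_self (h : GardenRel L) (I : Fin N) : (L I)ᵀ * L I = 1 := by
  have h2 := (h I I).2
  rw [if_pos rfl, ← two_smul ℤ] at h2
  exact smul_right_injective _ (two_ne_zero : (2 : ℤ) ≠ 0) h2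

theorem mul_transpose_swap (h : GardenRel L) {I J : Fin N} (hIJ : I ≠ J) :
    L I * (L J)ᵀ = -(L J * (L I)ᵀ) := by
  have h1 := (h I J).1
  rw [if_neg hIJ] at h1
  exact eq_neg_of_add_eq_zero_left h1

theorem transpose_mul_swap (h : GardenRel L) {I J : Fin N} (hIJ : I ≠ J) :
    (L I)ᵀ * L J = -((L J)ᵀ * L I) := by
  have h2 := (h I J).2
  rw [if_neg hIJ] at h2
  exact eq_neg_of_add_eq_zero_left h2

/-- If `L_J L_Kᵀ L_M = c L_I`, then `L_Kᵀ L_M = -c L_Iᵀ L_J`. -/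
theorem transpose_mul_eq_of_triple (h : GardenRel L) {I J K M : Fin N} (hIJ : I ≠ J) {c : ℤ}
    (hc : L J * (L K)ᵀ * L M = c • L I) : (L K)ᵀ * L M = -c • ((L I)ᵀ * L J) := by
  calc (L K)ᵀ * L M = (L J)ᵀ * (L J * (L K)ᵀ * L M) := by
        rw [← Matrix.mul_assoc, ← Matrix.mul_assoc, h.transpose_mul_self, Matrix.one_mul]
    _ = -c • ((L I)ᵀ * L J) := by
        rw [hc, Matrix.mul_smul, h.transpose_mul_swap hIJ.symm, smul_neg, neg_smul]

/-- The products `L_Iᵀ L_J` on complementary pairs of indices agree up to a sign given by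
the chirality. -/
theorem transpose_mul_complementary {L : Fin 4 → Matrix (Fin d) (Fin d) ℤ} (h : GardenRel L)
    {χ : ℤ} (hχ : (L 0)ᵀ * L 1 * (L 2)ᵀ * L 3 = -(χ • (1 : Matrix (Fin d) (Fin d) ℤ))) :
    (L 2)ᵀ * L 3 = χ • ((L 0)ᵀ * L 1) ∧ (L 1)ᵀ * L 3 = -χ • ((L 0)ᵀ * L 2) ∧
      (L 1)ᵀ * L 2 = χ • ((L 0)ᵀ * L 3) := by
  have h0 : L 0 * (L 0)ᵀ = 1 := mul_eq_one_comm.mp (h.transpose_mul_self 0)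
  have h123 : L 1 * (L 2)ᵀ * L 3 = -χ • L 0 := by
    have := congrArg (L 0 * ·) hχ
    simpa only [← Matrix.mul_assoc, h0, Matrix.one_mul, Matrix.mul_neg, Matrix.mul_smul,
      Matrix.mul_one, ← neg_smul] using this
  have h213 : L 2 * (L 1)ᵀ * L 3 = χ • L 0 := by
    rw [h.mul_transpose_swap (by decide : (2 : Fin 4) ≠ 1), Matrix.neg_mul, h123, neg_smul, neg_neg]
  have h312 : L 3 * (L 1)ᵀ * L 2 = -χ • L 0 := by
    rw [h.mul_transpose_swap (by decide : (3 : Fin 4) ≠ 1), Matrix.neg_mul, Matrix.mul_assoc,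
      h.transpose_mul_swap (by decide : (3 : Fin 4) ≠ 2), Matrix.mul_neg, neg_neg,
      ← Matrix.mul_assoc, h123]
  refine ⟨?_, ?_, ?_⟩
  · simpa using h.transpose_mul_eq_of_triple (by decide) h123
  · exact h.transpose_mul_eq_of_triple (by decide) h213
  · simpa using h.transpose_mul_eq_of_triple (by decide) h312

end GardenRel

/-- The sum over ordered pairs is twice the sum over unordered pairs. -/
theorem gadgetSum_eq_two_mul {L L' : Fin 4 → Matrix (Fin 4) (Fin 4) ℤ}
    (h : GardenRel L) (h' : GardenRel L') :
    gadgetSum L L' = 2 *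
      (trace ((L 0)ᵀ * L 1 * ((L' 0)ᵀ * L' 1)) + trace ((L 0)ᵀ * L 2 * ((L' 0)ᵀ * L' 2)) +
       trace ((L 0)ᵀ * L 3 * ((L' 0)ᵀ * L' 3)) + trace ((L 1)ᵀ * L 2 * ((L' 1)ᵀ * L' 2)) +
       trace ((L 1)ᵀ * L 3 * ((L' 1)ᵀ * L' 3)) + trace ((L 2)ᵀ * L 3 * ((L' 2)ᵀ * L' 3))) := by
  have swap {I J : Fin 4} (hIJ : I ≠ J) : trace ((L I)ᵀ * L J * ((L' I)ᵀ * L' J)) =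
      trace ((L J)ᵀ * L I * ((L' J)ᵀ * L' I)) := by
    rw [h.transpose_mul_swap hIJ, h'.transpose_mul_swap hIJ, neg_mul_neg]
  simp only [gadgetSum, Matrix.mul_assoc _ (L' _)ᵀ, Fin.sum_univ_four]
  rw [swap (by decide : (1 : Fin 4) ≠ 0), swap (by decide : (2 : Fin 4) ≠ 0),
    swap (by decide : (3 : Fin 4) ≠ 0), swap (by decide : (2 : Fin 4) ≠ 1),
    swap (by decide : (3 : Fin 4) ≠ 1), swap (by decide : (3 : Fin 4) ≠ 2)]
  simp
  ring

theorem stmt12 (L L' : Fin 4 → Matrix (Fin 4) (Fin 4) ℤ)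
    (hL : IsAdinkra L) (hL' : IsAdinkra L')
    (χ χ' : ℤ) (hχ : χ = 1 ∨ χ = -1) (hχ' : χ' = 1 ∨ χ' = -1)
    (hchir : (L 0)ᵀ * L 1 * (L 2)ᵀ * L 3 = -(χ • (1 : Matrix (Fin 4) (Fin 4) ℤ)))
    (hchir' : (L' 0)ᵀ * L' 1 * (L' 2)ᵀ * L' 3 = -(χ' • (1 : Matrix (Fin 4) (Fin 4) ℤ))) :
    gadgetSum L L' =
      2 * (1 + χ * χ') *
        (Matrix.trace ((L 0)ᵀ * L 1 * (L' 0)ᵀ * L' 1) +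
         Matrix.trace ((L 0)ᵀ * L 2 * (L' 0)ᵀ * L' 2) +
         Matrix.trace ((L 0)ᵀ * L 3 * (L' 0)ᵀ * L' 3)) := by
  obtain ⟨h23, h13, h12⟩ := hL.2.transpose_mul_complementary hchir
  obtain ⟨h23', h13', h12'⟩ := hL'.2.transpose_mul_complementary hchir'
  rw [gadgetSum_eq_two_mul hL.2 hL'.2, h23, h13, h12, h23', h13', h12']
  simp only [Matrix.mul_assoc _ (L' _)ᵀ, Matrix.smul_mul, Matrix.mul_smul, Matrix.trace_smul,
    smul_eq_mul]
  ring
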